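/- Let W be a recurrent infinite word over a finite alphabet whose complexity function has minimal growth, i.e. there exists N such that T_W(k+1) = T_W(k) + 1 for all k ≥ N. Then W is uniformly recurrent. -/

import Mathlib

/-- The factor of the infinite word `W` of length `n` starting at position `i`. -/
def factorAt {A : Type*} (W : ℕ → A) (i n : ℕ) : List A :=
  (List.range n).map (fun j => W (i + j))

/-- `u` is a factor (subword) of the infinite word `W`. -/
def IsFactor {A : Type*} (W : ℕ → A) (u : List A) : Prop :=
  ∃ i, u = factorAt W i u.length

/-- The complexity function: the number of distinct factors of `W` of length `n`. -/
noncomputable def complexity {A : Type*} (W : ℕ → A) (n : ℕ) : ℕ :=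
  Set.ncard {u : List A | u.length = n ∧ IsFactor W u}

/-- `W` is recurrent: every factor occurs at infinitely many positions. -/
def Recurrent {A : Type*} (W : ℕ → A) : Prop :=
  ∀ u : List A, IsFactor W u → {i : ℕ | factorAt W i u.length = u}.Infinite

/-- `W` is uniformly recurrent: it is recurrent, and for every factor `v`
there is `N` such that every factor of `W` of length at least `N` contains
`v` as a factor. -/
def UniformlyRecurrent {A : Type*} (W : ℕ → A) : Prop :=
  Recurrent W ∧ ∀ v : List A, IsFactor W v →
    ∃ N : ℕ, ∀ w : List A, IsFactor W w → N ≤ w.length → v <:+: w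

/-!
A word which is recurrent and eventually periodic is purely periodic, hence uniformly recurrent.
Otherwise, by recurrence, every factor `v` is a prefix of arbitrarily long right special factors:
two occurrences of `v` inside a long common block must eventually be continued differently.
When the complexity grows by at most one from `m` to `m + 1`, there is at most one right special
factor of length `m`. A window avoiding it is deterministic, so by the pigeonhole principle it can
only be long if the word is eventually periodic; thus the right special factor, and `v` with it,
shows up in every long window.
-/

/-- `W` is eventually periodic, encoded as the coincidence of the suffixes starting at two distinct
positions `i < j`; the period is then `j - i`. -/
def EventuallyPeriodic {A : Type*} (W : ℕ → A) : Prop :=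
  ∃ i j, i < j ∧ ∀ t, W (i + t) = W (j + t)

/-- `u` is a right special factor of `W`: it can be continued in `W` by two different letters.
Minimal growth of the complexity forces such factors to be unique of their length. -/
def IsRightSpecial {A : Type*} (W : ℕ → A) (u : List A) : Prop :=
  ∃ a b, a ≠ b ∧ IsFactor W (u ++ [a]) ∧ IsFactor W (u ++ [b])

theorem ncard_image_add_two_le {α β : Type*} {f : α → β} {s : Set α} (hs : s.Finite)
    {x x' y y' : α} (hx : x ∈ s) (hx' : x' ∈ s) (hy : y ∈ s) (hy' : y' ∈ s)
    (hxx' : x ≠ x') (hyy' : y ≠ y') (hfx : f x = f x') (hfy : f y = f y') (hxy : f x ≠ f y) :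
    (f '' s).ncard + 2 ≤ s.ncard := by
  have hpair : {x', y'} ⊆ s := Set.pair_subset hx' hy'
  have himage : f '' s ⊆ f '' (s \ {x', y'}) := by
    rintro _ ⟨z, hz, rfl⟩
    by_cases hzx : z = x'
    · exact ⟨x, ⟨hx, by grind⟩, by rw [hfx, hzx]⟩
    by_cases hzy : z = y'
    · exact ⟨y, ⟨hy, by grind⟩, by rw [hfy, hzy]⟩
    exact ⟨z, ⟨hz, by grind⟩, rfl⟩
  calc (f '' s).ncard + 2
      ≤ (s \ {x', y'}).ncard + ({x', y'} : Set α).ncard := by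
        rw [Set.ncard_pair (by grind)]
        gcongr
        exact (Set.ncard_le_ncard himage (hs.sdiff.image f)).trans (Set.ncard_image_le hs.sdiff)
    _ = s.ncard := Set.ncard_sdiff_add_ncard_of_subset hpair hs

section Factors

variable {A : Type*} {W : ℕ → A} {i j m : ℕ}

@[simp]
theorem length_factorAt (W : ℕ → A) (i n : ℕ) : (factorAt W i n).length = n := by
  simp [factorAt]

theorem isFactor_factorAt (W : ℕ → A) (i n : ℕ) : IsFactor W (factorAt W i n) :=
  ⟨i, by rw [length_factorAt]⟩

theorem factorAt_eq_factorAt_iff :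
    factorAt W i m = factorAt W j m ↔ ∀ t < m, W (i + t) = W (j + t) := by
  simp [factorAt]

theorem factorAt_add (W : ℕ → A) (i m n : ℕ) :
    factorAt W i (m + n) = factorAt W i m ++ factorAt W (i + m) n := by
  simp [factorAt, List.range_add, Function.comp_def, add_assoc]

theorem factorAt_succ (W : ℕ → A) (i m : ℕ) :
    factorAt W i (m + 1) = factorAt W i m ++ [W (i + m)] := by
  simp [factorAt, List.range_succ]

theorem factorAt_succ' (W : ℕ → A) (i m : ℕ) :
    factorAt W i (m + 1) = W i :: factorAt W (i + 1) m := by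
  rw [add_comm m 1, factorAt_add]
  simp [factorAt]

theorem factorAt_prefix_factorAt (W : ℕ → A) (i : ℕ) {m n : ℕ} (h : m ≤ n) :
    factorAt W i m <+: factorAt W i n := by
  obtain ⟨c, rfl⟩ := Nat.exists_eq_add_of_le h
  exact ⟨_, (factorAt_add W i m c).symm⟩

theorem factorAt_infix_factorAt (W : ℕ → A) (k : ℕ) {s m n : ℕ} (h : s + m ≤ n) :
    factorAt W (k + s) m <:+: factorAt W k n := by
  obtain ⟨c, rfl⟩ := Nat.exists_eq_add_of_le h
  rw [factorAt_add, factorAt_add]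
  exact List.infix_append _ _ _

theorem finite_setOf_isFactor [Finite A] (W : ℕ → A) (n : ℕ) :
    {u : List A | u.length = n ∧ IsFactor W u}.Finite :=
  (List.finite_length_eq A n).subset fun _ hu => hu.1

theorem image_dropLast_setOf_isFactor (W : ℕ → A) (m : ℕ) :
    List.dropLast '' {u : List A | u.length = m + 1 ∧ IsFactor W u} =
      {u : List A | u.length = m ∧ IsFactor W u} := by
  ext u
  constructor
  · rintro ⟨w, ⟨hw, i, hi⟩, rfl⟩
    rw [hi, hw, factorAt_succ, List.dropLast_concat]
    exact ⟨length_factorAt W i m, isFactor_factorAt W i m⟩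
  · rintro ⟨rfl, i, hi⟩
    refine ⟨factorAt W i (u.length + 1),
      ⟨length_factorAt W i _, isFactor_factorAt W i _⟩, ?_⟩
    rw [factorAt_succ, List.dropLast_concat, ← hi]

end Factors

section RightSpecial

variable {A : Type*} {W : ℕ → A} {i j m : ℕ}

theorem isRightSpecial_factorAt (h : factorAt W i m = factorAt W j m)
    (hne : W (i + m) ≠ W (j + m)) : IsRightSpecial W (factorAt W i m) := by
  refine ⟨W (i + m), W (j + m), hne, ?_, ?_⟩
  · rw [← factorAt_succ]
    exact isFactor_factorAt W i (m + 1)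
  · rw [h, ← factorAt_succ]
    exact isFactor_factorAt W j (m + 1)

theorem factorAt_succ_eq_of_not_isRightSpecial (h : factorAt W i m = factorAt W j m)
    (hns : ¬ IsRightSpecial W (factorAt W i m)) :
    factorAt W i (m + 1) = factorAt W j (m + 1) := by
  have hletter : W (i + m) = W (j + m) := by
    by_contra hne
    exact hns (isRightSpecial_factorAt h hne)
  rw [factorAt_succ, factorAt_succ, h, hletter]

theorem IsRightSpecial.eq_of_length_eq [Finite A] {u v : List A} (hu : IsRightSpecial W u)
    (hv : IsRightSpecial W v) (hlen : u.length = v.length)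
    (hgrowth : complexity W (u.length + 1) ≤ complexity W u.length + 1) : u = v := by
  obtain ⟨a, a', ha, hua, hua'⟩ := hu
  obtain ⟨b, b', hb, hvb, hvb'⟩ := hv
  by_contra hne
  have hcard := ncard_image_add_two_le (f := List.dropLast)
    (finite_setOf_isFactor W (u.length + 1))
    (x := u ++ [a]) (x' := u ++ [a']) (y := v ++ [b]) (y' := v ++ [b'])
    ⟨by simp, hua⟩ ⟨by simp, hua'⟩ ⟨by simp [hlen], hvb⟩ ⟨by simp [hlen], hvb'⟩
    (by simpa using ha) (by simpa using hb) (by simp) (by simp) (by simpa using hne)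
  rw [image_dropLast_setOf_isFactor] at hcard
  have hgap : complexity W u.length + 2 ≤ complexity W (u.length + 1) := hcard
  lia

theorem eventuallyPeriodic_of_forall_not_isRightSpecial {p q : ℕ} (hpq : p < q)
    (heq : factorAt W p m = factorAt W q m)
    (hns : ∀ i, p ≤ i → i < q → ¬ IsRightSpecial W (factorAt W i m)) :
    EventuallyPeriodic W := by
  have step {i j : ℕ} (hpi : p ≤ i) (hiq : i < q) (h : factorAt W i m = factorAt W j m) :
      W (i + m) = W (j + m) ∧ factorAt W (i + 1) m = factorAt W (j + 1) m := by
    have hsucc := factorAt_succ_eq_of_not_isRightSpecial h (hns i hpi hiq)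
    refine ⟨factorAt_eq_factorAt_iff.1 hsucc m m.lt_succ_self, ?_⟩
    rw [factorAt_succ', factorAt_succ'] at hsucc
    exact (List.cons.inj hsucc).2
  -- Reading on from `p` and from `q` runs through the factors at `p, …, q - 1` cyclically.
  have cycle (t : ℕ) : ∃ i, p ≤ i ∧ i < q ∧
      factorAt W i m = factorAt W (p + t) m ∧ factorAt W i m = factorAt W (q + t) m := by
    induction t with
    | zero => exact ⟨p, le_rfl, hpq, rfl, heq⟩
    | succ t ih =>
      obtain ⟨i, hpi, hiq, hp, hq⟩ := ih
      have hp' := (step hpi hiq hp).2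
      have hq' := (step hpi hiq hq).2
      obtain hlt | rfl : i + 1 < q ∨ i + 1 = q := by lia
      · exact ⟨i + 1, by lia, hlt, hp', hq'⟩
      · exact ⟨p, le_rfl, hpq, heq.trans hp', heq.trans hq'⟩
  refine ⟨p + m, q + m, by lia, fun t => ?_⟩
  obtain ⟨i, hpi, hiq, hp, hq⟩ := cycle t
  rw [add_right_comm p, add_right_comm q]
  exact (step hpi hiq hp).1.symm.trans (step hpi hiq hq).1

theorem exists_lt_factorAt_eq [Finite A] (W : ℕ → A) (m k : ℕ) :
    ∃ p q, k ≤ p ∧ p < q ∧ q ≤ k + complexity W m ∧ factorAt W p m = factorAt W q m := by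
  have hcard : complexity W m < (Set.Icc k (k + complexity W m)).ncard := by
    simp only [Set.ncard_eq_toFinset_card', Set.toFinset_Icc, Nat.card_Icc]
    lia
  obtain ⟨p, hp, q, hq, hne, heq⟩ :=
    Set.exists_ne_map_eq_of_ncard_lt_of_maps_to hcard
      (fun i _ => ⟨length_factorAt W i m, isFactor_factorAt W i m⟩) (finite_setOf_isFactor W m)
  obtain hlt | hlt := hne.lt_or_gt
  · exact ⟨p, q, hp.1, hlt, hq.2, heq⟩
  · exact ⟨q, p, hq.1, hlt, hp.2, heq.symm⟩

theorem exists_isRightSpecial_factorAt [Finite A] (hW : ¬ EventuallyPeriodic W) (m k : ℕ) :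
    ∃ s ≤ complexity W m, IsRightSpecial W (factorAt W (k + s) m) := by
  obtain ⟨p, q, hkp, hpq, hq, heq⟩ := exists_lt_factorAt_eq W m k
  by_contra! hns
  refine hW (eventuallyPeriodic_of_forall_not_isRightSpecial hpq heq fun i hpi hiq => ?_)
  obtain ⟨s, rfl⟩ := Nat.exists_eq_add_of_le (hkp.trans hpi)
  exact hns s (by lia)

end RightSpecial

section Recurrent

variable {A : Type*} {W : ℕ → A}

theorem Recurrent.exists_prefix_isRightSpecial (hrec : Recurrent W)
    (hW : ¬ EventuallyPeriodic W) {v : List A} (hv : IsFactor W v) (N : ℕ) :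
    ∃ u, IsRightSpecial W u ∧ N ≤ u.length ∧ v <+: u := by
  classical
  obtain ⟨i, hi⟩ := hv
  obtain ⟨j, hj, hij⟩ := (hrec _ (isFactor_factorAt W i (v.length + N))).exists_gt i
  simp only [length_factorAt, Set.mem_ofPred_eq] at hj
  have hdiff : ∃ t, W (i + t) ≠ W (j + t) := by
    by_contra! h
    exact hW ⟨i, j, hij, h⟩
  obtain ⟨t, ht, hmin⟩ : ∃ t, W (i + t) ≠ W (j + t) ∧ ∀ r < t, W (i + r) = W (j + r) :=
    ⟨Nat.find hdiff, Nat.find_spec hdiff, fun r hr => not_not.1 (Nat.find_min hdiff hr)⟩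
  have hlong : v.length + N ≤ t := by
    by_contra! hlt
    exact ht (factorAt_eq_factorAt_iff.1 hj.symm t hlt)
  refine ⟨factorAt W i t, isRightSpecial_factorAt (factorAt_eq_factorAt_iff.2 hmin) ht, ?_, ?_⟩
  · rw [length_factorAt]
    lia
  · rw [hi]
    exact factorAt_prefix_factorAt W i (by lia)

theorem Recurrent.uniformlyRecurrent_of_eventuallyPeriodic (hrec : Recurrent W)
    (hper : EventuallyPeriodic W) : UniformlyRecurrent W := by
  classical
  obtain ⟨i, j, hij, h⟩ := hper
  refine ⟨hrec, fun v hv => ⟨j + v.length, ?_⟩⟩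
  rintro w ⟨k, hw⟩ hlen
  have hocc : ∃ q, k + i ≤ q ∧ factorAt W q v.length = v := by
    obtain ⟨q, hq, hlt⟩ := (hrec v hv).exists_gt (k + i)
    exact ⟨q, hlt.le, hq⟩
  obtain ⟨q, ⟨hkq, hq⟩, hmin⟩ : ∃ q, (k + i ≤ q ∧ factorAt W q v.length = v) ∧
      ∀ r, k + i ≤ r → factorAt W r v.length = v → q ≤ r :=
    ⟨Nat.find hocc, Nat.find_spec hocc, fun r hr hrv => Nat.find_min' hocc ⟨hr, hrv⟩⟩
  -- An occurrence at `k + j` or later could be moved to the left by the period `j - i`.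
  have hqj : q < k + j := by
    by_contra! hle
    have hshift : factorAt W (q - (j - i)) v.length = factorAt W q v.length := by
      refine factorAt_eq_factorAt_iff.2 fun t _ => ?_
      convert h (q - j + t) using 2 <;> lia
    have := hmin (q - (j - i)) (by lia) (hshift.trans hq)
    lia
  obtain ⟨s, rfl⟩ := Nat.exists_eq_add_of_le (Nat.le_of_add_right_le hkq)
  rw [hw, ← hq]
  exact factorAt_infix_factorAt W k (by lia)

end Recurrent

theorem minimal_growth_uniformly_recurrent_general {A : Type*} [Finite A]
    (W : ℕ → A) (hrec : Recurrent W)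
    (hgrowth : ∃ N : ℕ, ∀ k ≥ N, complexity W (k + 1) ≤ complexity W k + 1) :
    UniformlyRecurrent W := by
  by_cases hper : EventuallyPeriodic W
  · exact hrec.uniformlyRecurrent_of_eventuallyPeriodic hper
  obtain ⟨N, hN⟩ := hgrowth
  refine ⟨hrec, fun v hv => ?_⟩
  obtain ⟨u, hu, hNu, hvu⟩ := hrec.exists_prefix_isRightSpecial hper hv N
  refine ⟨complexity W u.length + u.length, ?_⟩
  rintro w ⟨k, hw⟩ hlen
  obtain ⟨s, hs, hspecial⟩ := exists_isRightSpecial_factorAt hper u.length k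
  have hus : u = factorAt W (k + s) u.length :=
    hu.eq_of_length_eq hspecial (length_factorAt W _ _).symm (hN _ hNu)
  have huw : u <:+: w := by
    rw [hw, hus]
    exact factorAt_infix_factorAt W k (by lia)
  exact hvu.isInfix.trans huw

/-- A recurrent word over a finite alphabet whose complexity has minimal
growth (`T_W(k+1) = T_W(k) + 1` for all large `k`) is uniformly recurrent. -/
theorem minimal_growth_uniformly_recurrent {A : Type*} [Fintype A]
    (W : ℕ → A) (hrec : Recurrent W)
    (hgrowth : ∃ N : ℕ, ∀ k ≥ N, complexity W (k + 1) = complexity W k + 1) :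
    UniformlyRecurrent W :=
  minimal_growth_uniformly_recurrent_general W hrec
    (hgrowth.imp fun _ h k hk => (h k hk).le)
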